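/- Let α, β ≥ −1/2 and let P̃_n^{(α,β)} denote the Jacobi polynomial of degree n normalized in L²([−1,1], (1−t)^α(1+t)^β). Then there is a constant c = c(α,β) such that for all n ≥ 1 and x ∈ [−1,1]: |P̃_n^{(α,β)}(x)| ≤ c · (1−x+n^{−2})^{−(α+1/2)/2} · (1+x+n^{−2})^{−(β+1/2)/2}. -/

import Mathlib

open Real Set MeasureTheory

/-!
The operator `D y = (1 - x²) y'' + (β - α - (α + β + 2) x) y'` is symmetric for the Jacobi inner
product and does not raise degrees, so orthogonality alone forces `D P_n = -λ P_n` with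
`λ = n (n + α + β + 1)`. In the variable `θ = arccos x` and with `W = (1 - x)^(α + 1/2)
(1 + x)^(β + 1/2)`, the function `u = √W P_n` solves a perturbed harmonic oscillator
`u'' + (ν² + O(1 / sin² θ)) u = 0` where `ν = n + (α + β + 1) / 2`. By Gronwall its energy
`u'² + ν² u²` changes only by a bounded factor as long as `1 ± x ≥ δ / n²`. Since
`∫ (1 - x²) P_n'² w = λ ∫ P_n² w = λ`, the energy is `O(n²)` at some point of `[-1/2, 1/2]`, hence
`W P_n²` is bounded at distance at least `δ / n²` from the endpoints. On the two remaining intervals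
the differential equation bounds `P_n'` by a multiple of `n² max |P_n|`, so that `P_n` at most
doubles there, while the regularised weight stays comparable to its value at `1 ± x = δ / n²`.
-/

namespace JacobiPolynomial

open Polynomial

section OrthogonalSequence

variable {K : Type*} [Field K] {L : K[X] →ₗ[K] K} {S : Polynomial.Sequence K} {n : ℕ} {q : K[X]}

lemma map_mul_eq_zero_of_degree_lt (horth : Pairwise fun i j ↦ L (S i * S j) = 0)
    (hq : q.degree < n) : L (S n * q) = 0 := by
  suffices degreeLT K n ≤ LinearMap.ker (L ∘ₗ LinearMap.mulLeft K (S n)) from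
    this (mem_degreeLT.mpr hq)
  rw [← S.span_degreeLT fun i _ ↦ (leadingCoeff_ne_zero.mpr (S.ne_zero i)).isUnit,
    Submodule.span_le]
  rintro _ ⟨k, hk, rfl⟩
  exact horth (ne_of_gt hk)

lemma eq_zero_of_forall_map_mul_eq_zero (horth : Pairwise fun i j ↦ L (S i * S j) = 0)
    (hdiag : ∀ k, L (S k * S k) ≠ 0) (hq : q.degree < n) (h : ∀ k < n, L (S k * q) = 0) :
    q = 0 := by
  by_contra hq0
  set k := q.natDegree
  set a := q.leadingCoeff / (S k).leadingCoeff with ha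
  have ha0 : a ≠ 0 :=
    div_ne_zero (leadingCoeff_ne_zero.mpr hq0) (leadingCoeff_ne_zero.mpr (S.ne_zero k))
  have hrem : (q - a • S k).degree < k := by
    rw [← degree_eq_natDegree hq0]
    refine degree_sub_lt_left ?_ hq0 ?_
    · rw [smul_eq_C_mul, degree_C_mul ha0, S.degree_eq, degree_eq_natDegree hq0]
    · rw [smul_eq_C_mul, leadingCoeff_mul, leadingCoeff_C, ha,
        div_mul_cancel₀ _ (leadingCoeff_ne_zero.mpr (S.ne_zero k))]
  have hLrem := map_mul_eq_zero_of_degree_lt horth hrem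
  rw [mul_sub, map_sub, h k ((natDegree_lt_iff_degree_lt hq0).mpr hq), mul_smul_comm, map_smul,
    zero_sub, neg_eq_zero, smul_eq_mul] at hLrem
  exact mul_ne_zero ha0 (hdiag k) hLrem

lemma apply_eq_smul_of_symmetric (horth : Pairwise fun i j ↦ L (S i * S j) = 0)
    (hdiag : ∀ k, L (S k * S k) ≠ 0) {D : K[X] →ₗ[K] K[X]}
    (hsymm : ∀ p q, L (D p * q) = L (p * D q)) (hdeg : ∀ p, (D p).degree ≤ p.degree) {μ : K}
    (hcoeff : (D (S n)).coeff n = μ * (S n).coeff n) : D (S n) = μ • S n := by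
  rw [← sub_eq_zero]
  refine eq_zero_of_forall_map_mul_eq_zero (n := n) horth hdiag ?_ fun k hk ↦ ?_
  · rw [degree_lt_iff_coeff_zero]
    intro m hm
    rcases hm.eq_or_lt with rfl | hm
    · simp [hcoeff]
    · refine coeff_eq_zero_of_degree_lt (lt_of_le_of_lt (degree_sub_le _ _) ?_)
      have hSn : (S n).degree < m := by simpa using hm
      exact max_lt ((hdeg _).trans_lt hSn) ((degree_smul_le _ _).trans_lt hSn)
  · have hDk : (D (S k)).degree < n := (hdeg _).trans_lt (by simpa using hk)
    rw [mul_sub, map_sub, ← hsymm, mul_comm, map_mul_eq_zero_of_degree_lt horth hDk,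
      mul_smul_comm, map_smul, horth hk.ne, smul_zero, sub_zero]

end OrthogonalSequence

/-- The Jacobi weight `(1 - t)^α (1 + t)^β`. -/
noncomputable def weight (α β t : ℝ) : ℝ := (1 - t) ^ α * (1 + t) ^ β

section Weight

variable {α β x : ℝ}

lemma weight_pos (hx : x ∈ Ioo (-1) 1) : 0 < weight α β x :=
  mul_pos (rpow_pos_of_pos (by linarith [hx.2]) _) (rpow_pos_of_pos (by linarith [hx.1]) _)

lemma weight_nonneg (hx : x ∈ Icc (-1) 1) : 0 ≤ weight α β x :=
  mul_nonneg (rpow_nonneg (by linarith [hx.2]) _) (rpow_nonneg (by linarith [hx.1]) _)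

lemma one_sub_sq_pos (hx : x ∈ Ioo (-1) 1) : 0 < 1 - x ^ 2 := by
  nlinarith [hx.1, hx.2]

lemma weight_add (c : ℝ) (hx : x ∈ Ioo (-1) 1) :
    weight (α + c) (β + c) x = (1 - x ^ 2) ^ c * weight α β x := by
  have h₁ : 0 < 1 - x := by linarith [hx.2]
  have h₂ : 0 < 1 + x := by linarith [hx.1]
  rw [weight, weight, rpow_add h₁, rpow_add h₂, show 1 - x ^ 2 = (1 - x) * (1 + x) by ring,
    mul_rpow h₁.le h₂.le]
  ring

lemma hasDerivAt_weight (α β : ℝ) (hx : x ∈ Ioo (-1) 1) :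
    HasDerivAt (weight α β) ((β / (1 + x) - α / (1 - x)) * weight α β x) x := by
  have h₁ : 0 < 1 - x := by linarith [hx.2]
  have h₂ : 0 < 1 + x := by linarith [hx.1]
  have d₁ := ((hasDerivAt_id x).const_sub 1).rpow_const (p := α) (Or.inl h₁.ne')
  have d₂ := ((hasDerivAt_id x).const_add 1).rpow_const (p := β) (Or.inl h₂.ne')
  refine (d₁.mul d₂).congr_deriv ?_
  simp only [id_eq]
  rw [rpow_sub_one h₁.ne', rpow_sub_one h₂.ne', weight]
  field_simp
  ring

lemma continuousOn_weight : ContinuousOn (weight α β) (Ioo (-1) 1) :=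
  fun _ hx ↦ (hasDerivAt_weight α β hx).continuousAt.continuousWithinAt

lemma continuous_weight (hα : 0 ≤ α) (hβ : 0 ≤ β) : Continuous (weight α β) :=
  ((continuous_const.sub continuous_id).rpow_const fun _ ↦ Or.inr hα).mul
    ((continuous_const.add continuous_id).rpow_const fun _ ↦ Or.inr hβ)

lemma intervalIntegrable_weight (hα : -1 < α) (hβ : -1 < β) :
    IntervalIntegrable (weight α β) volume (-1) 1 := by
  have left : IntervalIntegrable (weight α β) volume (-1) 0 := by
    have h : IntervalIntegrable (fun t ↦ (1 + t) ^ β) volume (-1) 0 := by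
      simpa using (intervalIntegral.intervalIntegrable_rpow' (a := 0) (b := 1) hβ).comp_add_left 1
    refine h.continuousOn_mul (ContinuousOn.rpow_const (by fun_prop) fun x hx ↦ Or.inl ?_)
    rw [uIcc_of_le (by norm_num)] at hx
    linarith [hx.2]
  have right : IntervalIntegrable (weight α β) volume 0 1 := by
    have h : IntervalIntegrable (fun t ↦ (1 - t) ^ α) volume 1 0 := by
      simpa using (intervalIntegral.intervalIntegrable_rpow' (a := 0) (b := 1) hα).comp_sub_left 1
    refine h.symm.mul_continuousOn (ContinuousOn.rpow_const (by fun_prop) fun x hx ↦ Or.inl ?_)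
    rw [uIcc_of_le (by norm_num)] at hx
    linarith [hx.1]
  exact left.trans right

lemma intervalIntegrable_eval_mul_weight (hα : -1 < α) (hβ : -1 < β) (q : ℝ[X]) :
    IntervalIntegrable (fun t ↦ q.eval t * weight α β t) volume (-1) 1 :=
  (intervalIntegrable_weight hα hβ).continuousOn_mul q.continuous.continuousOn

end Weight

/-- Integration of polynomials against the Jacobi weight, as a linear functional. The restrictions
on the exponents make every polynomial integrable. -/
noncomputable def weightedIntegral {α β : ℝ} (hα : -1 < α) (hβ : -1 < β) : ℝ[X] →ₗ[ℝ] ℝ where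
  toFun q := ∫ t in (-1)..1, q.eval t * weight α β t
  map_add' p q := by
    rw [← intervalIntegral.integral_add (intervalIntegrable_eval_mul_weight hα hβ p)
      (intervalIntegrable_eval_mul_weight hα hβ q)]
    simp only [eval_add, add_mul]
  map_smul' c q := by
    simp only [eval_smul, smul_eq_mul, mul_assoc, intervalIntegral.integral_const_mul,
      RingHom.id_apply]

lemma weightedIntegral_apply {α β : ℝ} (hα : -1 < α) (hβ : -1 < β) (q : ℝ[X]) :
    weightedIntegral hα hβ q = ∫ t in (-1)..1, q.eval t * weight α β t := rfl

/-- The Jacobi differential operator `(1 - x²) y'' + (β - α - (α + β + 2) x) y'`. -/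
noncomputable def jacobiOp (α β : ℝ) : ℝ[X] →ₗ[ℝ] ℝ[X] :=
  LinearMap.mulLeft ℝ (1 - X ^ 2) ∘ₗ derivative ∘ₗ derivative +
    LinearMap.mulLeft ℝ (C (β - α) - C (α + β + 2) * X) ∘ₗ derivative

/-- The number `n (n + α + β + 1)`, for which `-n (n + α + β + 1)` is the eigenvalue of the Jacobi
operator on the Jacobi polynomial of degree `n`; later estimates allow real `n`. -/
noncomputable def eigenvalue (α β n : ℝ) : ℝ := n * (n + α + β + 1)

section Operator

variable {α β : ℝ}

lemma jacobiOp_apply (α β : ℝ) (p : ℝ[X]) :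
    jacobiOp α β p = (1 - X ^ 2) * derivative (derivative p) +
      (C (β - α) - C (α + β + 2) * X) * derivative p := rfl

lemma eval_jacobiOp (α β : ℝ) (p : ℝ[X]) (x : ℝ) :
    (jacobiOp α β p).eval x = (1 - x ^ 2) * (derivative (derivative p)).eval x +
      (β - α - (α + β + 2) * x) * (derivative p).eval x := by
  simp only [jacobiOp_apply, eval_add, eval_sub, eval_mul, eval_pow, eval_X, eval_one, eval_C]

lemma coeff_X_mul_derivative (p : ℝ[X]) (k : ℕ) :
    (X * derivative p).coeff k = k * p.coeff k := by
  cases k with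
  | zero => simp
  | succ k => rw [coeff_X_mul, coeff_derivative]; push_cast; ring

lemma coeff_jacobiOp (α β : ℝ) (p : ℝ[X]) (k : ℕ) :
    (jacobiOp α β p).coeff k = (k + 1) * (k + 2) * p.coeff (k + 2) +
      (β - α) * (k + 1) * p.coeff (k + 1) - eigenvalue α β k * p.coeff k := by
  have h : jacobiOp α β p = derivative (derivative p) + C (β - α) * derivative p -
      X * derivative (X * derivative p) - C (α + β + 1) * (X * derivative p) := by
    rw [jacobiOp_apply, derivative_mul, derivative_X, show α + β + 2 = α + β + 1 + 1 by ring,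
      C_add (a := α + β + 1), C_1]
    ring
  simp only [h, coeff_sub, coeff_add, coeff_C_mul, coeff_X_mul_derivative, coeff_derivative,
    eigenvalue]
  push_cast
  ring

lemma degree_jacobiOp_le (p : ℝ[X]) : (jacobiOp α β p).degree ≤ p.degree := by
  rw [degree_le_iff_coeff_zero]
  intro k hk
  have hcoeff (j : ℕ) : p.coeff (k + j) = 0 :=
    coeff_eq_zero_of_degree_lt (hk.trans_le (by exact_mod_cast Nat.le_add_right k j))
  rw [coeff_jacobiOp, hcoeff 2, hcoeff 1, show p.coeff k = 0 from hcoeff 0]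
  ring

lemma weightedIntegral_jacobiOp_mul (hα : -1 < α) (hβ : -1 < β) (p q : ℝ[X]) :
    weightedIntegral hα hβ (jacobiOp α β p * q) =
      -weightedIntegral hα hβ ((1 - X ^ 2) * derivative p * derivative q) := by
  rw [← add_eq_zero_iff_eq_neg, ← map_add]
  set r := jacobiOp α β p * q + (1 - X ^ 2) * derivative p * derivative q with hr
  have hcont : Continuous fun t ↦ weight (α + 1) (β + 1) t * ((derivative p * q).eval t) :=
    (continuous_weight (by linarith) (by linarith)).mul (derivative p * q).continuous
  have hderiv (x : ℝ) (hx : x ∈ Ioo (-1) 1) :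
      HasDerivAt (fun t ↦ weight (α + 1) (β + 1) t * ((derivative p * q).eval t))
        (r.eval x * weight α β x) x := by
    have h₁ : 1 - x ≠ 0 := by linarith [hx.2]
    have h₂ : 1 + x ≠ 0 := by linarith [hx.1]
    refine ((hasDerivAt_weight (α + 1) (β + 1) hx).mul
      ((derivative p * q).hasDerivAt x)).congr_deriv ?_
    rw [weight_add 1 hx, rpow_one, hr]
    simp only [derivative_mul, eval_add, eval_sub, eval_mul, eval_jacobiOp, eval_pow, eval_X,
      eval_one]
    field_simp
    ring
  have hftc := intervalIntegral.integral_eq_sub_of_hasDerivAt_of_le (by norm_num)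
    hcont.continuousOn hderiv (intervalIntegrable_eval_mul_weight hα hβ r)
  have hα' : α + 1 ≠ 0 := by linarith
  have hβ' : β + 1 ≠ 0 := by linarith
  simpa [weightedIntegral_apply, weight, zero_rpow hα', zero_rpow hβ'] using hftc

lemma weightedIntegral_jacobiOp_mul_comm (hα : -1 < α) (hβ : -1 < β) (p q : ℝ[X]) :
    weightedIntegral hα hβ (jacobiOp α β p * q) = weightedIntegral hα hβ (p * jacobiOp α β q) := by
  rw [mul_comm p, weightedIntegral_jacobiOp_mul, weightedIntegral_jacobiOp_mul, mul_right_comm]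

theorem jacobiOp_eq_neg_eigenvalue_smul (hα : -1 < α) (hβ : -1 < β) (S : Polynomial.Sequence ℝ)
    (horth : Pairwise fun i j ↦ weightedIntegral hα hβ (S i * S j) = 0)
    (hdiag : ∀ k, weightedIntegral hα hβ (S k * S k) ≠ 0) (n : ℕ) :
    jacobiOp α β (S n) = -eigenvalue α β n • S n := by
  refine apply_eq_smul_of_symmetric horth hdiag (weightedIntegral_jacobiOp_mul_comm hα hβ)
    degree_jacobiOp_le ?_
  have hcoeff (j : ℕ) : (S n).coeff (n + (j + 1)) = 0 :=
    coeff_eq_zero_of_degree_lt (by rw [S.degree_eq]; exact_mod_cast by omega)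
  rw [coeff_jacobiOp, hcoeff 1, hcoeff 0]
  ring

end Operator

section Eigenfunction

variable {α β l x x₁ M : ℝ} {y : ℝ[X]}

lemma jacobi_equation (hy : jacobiOp α β y = -l • y) (x : ℝ) :
    (1 - x ^ 2) * (derivative (derivative y)).eval x +
      (β - α - (α + β + 2) * x) * (derivative y).eval x + l * y.eval x = 0 := by
  rw [← eval_jacobiOp, hy, eval_smul, smul_eq_mul]
  ring

lemma weightedIntegral_derivative_mul_derivative (hα : -1 < α) (hβ : -1 < β)
    (hy : jacobiOp α β y = -l • y) :
    weightedIntegral hα hβ ((1 - X ^ 2) * derivative y * derivative y) =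
      l * weightedIntegral hα hβ (y * y) := by
  have h := weightedIntegral_jacobiOp_mul hα hβ y y
  rw [hy, smul_mul_assoc, map_smul, smul_eq_mul] at h
  linarith

lemma exists_mem_middle_le_weightedIntegral (hα : -1 < α) (hβ : -1 < β) {q : ℝ[X]}
    (hq : ∀ x ∈ Icc (-1) 1, 0 ≤ q.eval x) :
    ∃ x ∈ Icc (-(1 / 2)) (1 / 2), q.eval x * weight α β x ≤ weightedIntegral hα hβ q := by
  have hcont : ContinuousOn (fun t ↦ q.eval t * weight α β t) (uIcc (-(1 / 2)) (1 / 2)) := by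
    refine q.continuous.continuousOn.mul (continuousOn_weight.mono fun t ht ↦ ?_)
    rw [uIcc_of_le (by norm_num)] at ht
    exact ⟨by linarith [ht.1], by linarith [ht.2]⟩
  obtain ⟨x, hx, hmean⟩ := exists_eq_interval_average (by norm_num) hcont
  rw [interval_average_eq, show ((1 / 2 : ℝ) - -(1 / 2))⁻¹ = 1 by norm_num, one_smul] at hmean
  rw [uIoo_of_le (by norm_num)] at hx
  refine ⟨x, Ioo_subset_Icc_self hx, hmean.trans_le ?_⟩
  refine intervalIntegral.integral_mono_interval (by norm_num) (by norm_num) (by norm_num) ?_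
    (intervalIntegrable_eval_mul_weight hα hβ q)
  filter_upwards [ae_restrict_mem measurableSet_Ioc] with t ht
  have ht' := Ioc_subset_Icc_self ht
  exact mul_nonneg (hq t ht') (weight_nonneg ht')

lemma exists_mem_middle_dirichlet_le (hα : -1 < α) (hβ : -1 < β) (hl : 0 ≤ l)
    (hy : jacobiOp α β y = -l • y) :
    ∃ x ∈ Icc (-(1 / 2)) (1 / 2),
      ((1 - x ^ 2) * (derivative y).eval x ^ 2 + l * y.eval x ^ 2) * weight α β x ≤
        2 * l * weightedIntegral hα hβ (y * y) := by
  have heval (x : ℝ) : ((1 - X ^ 2) * derivative y * derivative y + l • (y * y)).eval x =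
      (1 - x ^ 2) * (derivative y).eval x ^ 2 + l * y.eval x ^ 2 := by
    simp only [eval_add, eval_mul, eval_smul, eval_sub, eval_one, eval_pow, eval_X, smul_eq_mul]
    ring
  obtain ⟨x, hx, hle⟩ := exists_mem_middle_le_weightedIntegral hα hβ
    (q := (1 - X ^ 2) * derivative y * derivative y + l • (y * y)) fun x hx ↦ by
      have hx' : 0 ≤ 1 - x ^ 2 := by nlinarith [hx.1, hx.2]
      rw [heval]
      positivity
  refine ⟨x, hx, ?_⟩
  rwa [heval, map_add, weightedIntegral_derivative_mul_derivative hα hβ hy, map_smul, smul_eq_mul,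
    ← two_mul, ← mul_assoc] at hle

lemma mul_nonpos_of_isMaxOn_sq_derivative (hx : x ∈ Icc x₁ 1)
    (hmax : IsMaxOn (fun t ↦ (derivative y).eval t ^ 2) (Icc x₁ 1) x) :
    (derivative y).eval x * (derivative (derivative y)).eval x * (1 - x) ≤ 0 := by
  have hderiv := (((derivative y).hasDerivAt x).fun_pow 2).hasDerivWithinAt (s := Icc x₁ 1)
  have hnonpos := hmax.localize.hasFDerivWithinAt_nonpos hderiv.hasFDerivWithinAt
    (sub_mem_posTangentConeAt_of_segment_subset
      ((convex_Icc x₁ 1).segment_subset hx (right_mem_Icc.mpr (hx.1.trans hx.2))))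
  simp only [ContinuousLinearMap.toSpanSingleton_apply, smul_eq_mul, Nat.cast_ofNat,
    Nat.add_one_sub_one, pow_one] at hnonpos
  linarith

lemma mul_abs_derivative_le (hα : -1 < α) (hβ : -1 < β) (hl : 0 ≤ l)
    (hy : jacobiOp α β y = -l • y) (hx₁ : -1 ≤ x₁) (hnear : (α + β + 2) * (1 - x₁) ≤ α + 1)
    (hM : ∀ t ∈ Icc x₁ 1, |y.eval t| ≤ M) (hx : x ∈ Icc x₁ 1) :
    (α + 1) * |(derivative y).eval x| ≤ l * M := by
  obtain ⟨z, hz, hmax⟩ := isCompact_Icc.exists_isMaxOn ⟨x, hx⟩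
    ((derivative y).continuous.pow 2).continuousOn
  have hxz : |(derivative y).eval x| ≤ |(derivative y).eval z| := sq_le_sq.mp (hmax hx)
  suffices (α + 1) * |(derivative y).eval z| ≤ l * M from
    (mul_le_mul_of_nonneg_left hxz (by linarith)).trans this
  have hM₀ : 0 ≤ M := (abs_nonneg _).trans (hM z hz)
  have hprod := mul_nonpos_of_isMaxOn_sq_derivative hz hmax
  have hode := jacobi_equation hy z
  set u := y.eval z
  set v := (derivative y).eval z
  set w := (derivative (derivative y)).eval z
  -- The reason for maximising `(y')²`: the term `(1 - z²) y'' y'` of the equation times `y'` is not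
  -- positive at `z`, even when `z` is an endpoint.
  have hsecond : (1 - z ^ 2) * (w * v) ≤ 0 := by nlinarith [hz.1]
  have huv : u * v ≤ M * |v| :=
    (le_abs_self _).trans ((abs_mul u v).trans_le (by gcongr; exact hM z hz))
  have hcoeff : α + 1 ≤ (α + β + 2) * z + α - β := by nlinarith [hz.1]
  have hsq : (α + 1) * |v| * |v| ≤ l * M * |v| := by
    calc (α + 1) * |v| * |v| = (α + 1) * v ^ 2 := by rw [mul_assoc, abs_mul_abs_self, sq]
      _ ≤ ((α + β + 2) * z + α - β) * v ^ 2 := by gcongr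
      _ = (1 - z ^ 2) * (w * v) + l * (u * v) := by linear_combination -v * hode
      _ ≤ l * M * |v| := by nlinarith
  rcases eq_or_ne v 0 with hv | hv
  · simpa [hv] using mul_nonneg hl hM₀
  · exact le_of_mul_le_mul_right hsq (abs_pos.mpr hv)

lemma abs_eval_le_two_mul_abs_eval (hα : -1 < α) (hβ : -1 < β) (hl : 0 ≤ l)
    (hy : jacobiOp α β y = -l • y) (hx₁ : -1 ≤ x₁) (hnear : (α + β + 2) * (1 - x₁) ≤ α + 1)
    (hnear' : l * (1 - x₁) ≤ (α + 1) / 2) (hx : x ∈ Icc x₁ 1) :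
    |y.eval x| ≤ 2 * |y.eval x₁| := by
  have hx₁' : x₁ ≤ 1 := hx.1.trans hx.2
  obtain ⟨z, hz, hmax⟩ := isCompact_Icc.exists_isMaxOn ⟨x, hx⟩ y.continuous.abs.continuousOn
  set D := l * |y.eval z| / (α + 1)
  have hD (t : ℝ) (ht : t ∈ Icc x₁ 1) : ‖(derivative y).eval t‖ ≤ D := by
    rw [Real.norm_eq_abs, le_div_iff₀' (by linarith)]
    exact mul_abs_derivative_le hα hβ hl hy hx₁ hnear (fun t ht ↦ hmax ht) ht
  have hmean : |y.eval z - y.eval x₁| ≤ D * |z - x₁| :=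
    (convex_Icc x₁ 1).norm_image_sub_le_of_norm_hasDerivWithin_le
      (fun t _ ↦ (y.hasDerivAt t).hasDerivWithinAt) hD (left_mem_Icc.mpr hx₁') hz
  have hDz : D * |z - x₁| ≤ |y.eval z| / 2 := by
    calc D * |z - x₁| ≤ D * (1 - x₁) := by
          have : 0 < α + 1 := by linarith
          rw [abs_of_nonneg (by linarith [hz.1])]
          gcongr
          exact hz.2
      _ = l * (1 - x₁) * |y.eval z| / (α + 1) := by ring
      _ ≤ (α + 1) / 2 * |y.eval z| / (α + 1) := by
          have : 0 < α + 1 := by linarith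
          gcongr
      _ = |y.eval z| / 2 := by
          have : α + 1 ≠ 0 := by linarith
          field_simp
  have htri := abs_sub_abs_le_abs_sub (y.eval z) (y.eval x₁)
  have hxz : |y.eval x| ≤ |y.eval z| := hmax hx
  linarith

lemma jacobiOp_comp_neg_X (hy : jacobiOp α β y = -l • y) :
    jacobiOp β α (y.comp (-X)) = -l • y.comp (-X) := by
  refine Polynomial.funext fun x ↦ ?_
  have hode := jacobi_equation hy (-x)
  simp only [eval_jacobiOp, derivative_comp, derivative_mul, derivative_neg, derivative_X,
    derivative_one, eval_smul, eval_add, eval_mul, eval_comp, eval_neg, eval_X, eval_one,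
    eval_zero, smul_eq_mul]
  linear_combination hode

end Eigenfunction

section Gronwall

variable {F F' G G' : ℝ → ℝ} {s : Set ℝ} {a b : ℝ}

lemma le_mul_exp_sub_of_deriv_le (hs : Convex ℝ s) (hF : ∀ x ∈ s, HasDerivAt F (F' x) x)
    (hG : ∀ x ∈ s, HasDerivAt G (G' x) x) (hle : ∀ x ∈ s, F' x ≤ G' x * F x)
    (ha : a ∈ s) (hb : b ∈ s) (hab : a ≤ b) : F b ≤ F a * exp (G b - G a) := by
  have hderiv (x : ℝ) (hx : x ∈ s) :
      HasDerivAt (fun t ↦ F t * exp (-G t)) ((F' x - G' x * F x) * exp (-G x)) x :=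
    ((hF x hx).mul (hG x hx).fun_neg.exp).congr_deriv (by ring)
  have hanti : AntitoneOn (fun t ↦ F t * exp (-G t)) s :=
    antitoneOn_of_hasDerivWithinAt_nonpos hs
      (fun x hx ↦ (hderiv x hx).continuousAt.continuousWithinAt)
      (fun x hx ↦ (hderiv x (interior_subset hx)).hasDerivWithinAt) fun x hx ↦
        mul_nonpos_of_nonpos_of_nonneg (sub_nonpos.mpr (hle x (interior_subset hx)))
          (exp_pos _).le
  calc F b = F b * exp (-G b) * exp (G b) := by rw [mul_assoc, ← exp_add]; simp
    _ ≤ F a * exp (-G a) * exp (G b) := 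
        mul_le_mul_of_nonneg_right (hanti ha hb hab) (exp_pos _).le
    _ = F a * exp (G b - G a) := by rw [mul_assoc, ← exp_add]; ring_nf

lemma le_mul_exp_abs_sub_of_abs_deriv_le (hs : Convex ℝ s)
    (hF : ∀ x ∈ s, HasDerivAt F (F' x) x) (hG : ∀ x ∈ s, HasDerivAt G (G' x) x)
    (hle : ∀ x ∈ s, |F' x| ≤ G' x * F x) (ha : a ∈ s) (hb : b ∈ s) (hFa : 0 ≤ F a) :
    F b ≤ F a * exp |G b - G a| := by
  suffices F b ≤ F a * exp (G b - G a) ∨ F b ≤ F a * exp (G a - G b) by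
    rcases this with h | h
    · exact h.trans (by gcongr; exact le_abs_self _)
    · exact h.trans (by gcongr; rw [abs_sub_comm]; exact le_abs_self _)
  rcases le_total a b with hab | hba
  · exact .inl (le_mul_exp_sub_of_deriv_le hs hF hG
      (fun x hx ↦ (le_abs_self _).trans (hle x hx)) ha hb hab)
  · right
    have hreflect (x : ℝ) (hx : x ∈ -s) : HasDerivAt (fun t ↦ F (-t)) (-F' (-x)) x := by
      simpa [Function.comp_def] using (hF (-x) hx).comp x (hasDerivAt_neg x)
    have hreflect' (x : ℝ) (hx : x ∈ -s) : HasDerivAt (fun t ↦ -G (-t)) (G' (-x)) x := by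
      simpa [Function.comp_def] using ((hG (-x) hx).comp x (hasDerivAt_neg x)).fun_neg
    have h := le_mul_exp_sub_of_deriv_le hs.neg hreflect hreflect'
      (fun x hx ↦ (neg_le_abs _).trans (hle (-x) hx))
      (show -a ∈ -s by simpa) (show -b ∈ -s by simpa) (neg_le_neg hba)
    simpa [neg_add_eq_sub] using h

end Gronwall

/-- Half the logarithmic derivative of `weight (α + 1/2) (β + 1/2)`. -/
noncomputable def halfLogDeriv (α β x : ℝ) : ℝ :=
  ((β + 1 / 2) / (1 + x) - (α + 1 / 2) / (1 - x)) / 2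

/-- The function `z = y' + (W' / (2 W)) y` with `W = weight (α + 1/2) (β + 1/2)`, so that `√W z` is
the derivative of `√W y`. -/
noncomputable def twistedDeriv (α β : ℝ) (y : ℝ[X]) (x : ℝ) : ℝ :=
  (derivative y).eval x + halfLogDeriv α β x * y.eval x

/-- The perturbation in the Liouville normal form: in the variable `θ = arccos x`, the function
`u = √W y` satisfies `u'' + (ν² + potential) u = 0`, where `W = weight (α + 1/2) (β + 1/2)` and
`ν = n + (α + β + 1) / 2`. -/
noncomputable def potential (α β x : ℝ) : ℝ :=
  (1 / 4 - α ^ 2) / (2 * (1 - x)) + (1 / 4 - β ^ 2) / (2 * (1 + x))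

/-- The energy `(du/dθ)² + ν² u²` of `u = √W y` in the variable `θ = arccos x`, where
`W = weight (α + 1/2) (β + 1/2)`. -/
noncomputable def energy (α β ν : ℝ) (y : ℝ[X]) (x : ℝ) : ℝ :=
  weight (α + 1 / 2) (β + 1 / 2) x *
    ((1 - x ^ 2) * twistedDeriv α β y x ^ 2 + ν ^ 2 * y.eval x ^ 2)

section Energy

variable {α β n ν x : ℝ} {y : ℝ[X]}

lemma hasDerivAt_weight_add_half (α β : ℝ) (hx : x ∈ Ioo (-1) 1) :
    HasDerivAt (weight (α + 1 / 2) (β + 1 / 2))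
      (2 * halfLogDeriv α β x * weight (α + 1 / 2) (β + 1 / 2) x) x :=
  (hasDerivAt_weight _ _ hx).congr_deriv (by rw [halfLogDeriv]; ring)

lemma hasDerivAt_halfLogDeriv (α β : ℝ) (hx : x ∈ Ioo (-1) 1) :
    HasDerivAt (halfLogDeriv α β)
      (-((β + 1 / 2) / (1 + x) ^ 2 + (α + 1 / 2) / (1 - x) ^ 2) / 2) x := by
  have h₁ : 1 - x ≠ 0 := by linarith [hx.2]
  have h₂ : 1 + x ≠ 0 := by linarith [hx.1]
  have d₁ := (hasDerivAt_const x (α + 1 / 2)).div ((hasDerivAt_id x).const_sub 1) h₁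
  have d₂ := (hasDerivAt_const x (β + 1 / 2)).div ((hasDerivAt_id x).const_add 1) h₂
  refine ((d₂.sub d₁).div_const 2).congr_deriv ?_
  simp only [id_eq]
  ring

lemma one_sub_sq_mul_halfLogDeriv (α β : ℝ) (hx : x ∈ Ioo (-1) 1) :
    2 * ((1 - x ^ 2) * halfLogDeriv α β x) = β - α - (α + β + 1) * x := by
  have h₁ : 1 - x ≠ 0 := by linarith [hx.2]
  have h₂ : 1 + x ≠ 0 := by linarith [hx.1]
  rw [halfLogDeriv]
  field_simp
  ring

lemma potential_eq (α β : ℝ) (hx : x ∈ Ioo (-1) 1) :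
    potential α β x = x * halfLogDeriv α β x - (1 - x ^ 2) *
      (-((β + 1 / 2) / (1 + x) ^ 2 + (α + 1 / 2) / (1 - x) ^ 2) / 2 + halfLogDeriv α β x ^ 2) -
      ((α + β + 1) / 2) ^ 2 := by
  have h₁ : 1 - x ≠ 0 := by linarith [hx.2]
  have h₂ : 1 + x ≠ 0 := by linarith [hx.1]
  rw [potential, halfLogDeriv]
  field_simp
  ring

lemma exists_hasDerivAt_twistedDeriv (hy : jacobiOp α β y = -eigenvalue α β n • y)
    (hx : x ∈ Ioo (-1) 1) :
    ∃ z', HasDerivAt (twistedDeriv α β y) z' x ∧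
      (1 - x ^ 2) * z' = (x - (1 - x ^ 2) * halfLogDeriv α β x) * twistedDeriv α β y x -
        ((n + (α + β + 1) / 2) ^ 2 + potential α β x) * y.eval x := by
  refine ⟨_, ((derivative y).hasDerivAt x).add
    ((hasDerivAt_halfLogDeriv α β hx).mul (y.hasDerivAt x)), ?_⟩
  have hode := jacobi_equation hy x
  rw [potential_eq α β hx, twistedDeriv]
  rw [eigenvalue] at hode
  linear_combination hode +
    (derivative y).eval x * one_sub_sq_mul_halfLogDeriv α β hx

lemma hasDerivAt_energy (hy : jacobiOp α β y = -eigenvalue α β n • y) (hx : x ∈ Ioo (-1) 1) :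
    HasDerivAt (energy α β (n + (α + β + 1) / 2) y)
      (-(2 * weight (α + 1 / 2) (β + 1 / 2) x * twistedDeriv α β y x * y.eval x *
        potential α β x)) x := by
  obtain ⟨z', hz', hz'_eq⟩ := exists_hasDerivAt_twistedDeriv hy hx
  have hA := ((hasDerivAt_id x).fun_pow 2).const_sub 1
  refine ((hasDerivAt_weight_add_half α β hx).mul ((hA.mul (hz'.fun_pow 2)).add
    (((y.hasDerivAt x).fun_pow 2).const_mul _))).congr_deriv ?_
  have hy' : (derivative y).eval x = twistedDeriv α β y x - halfLogDeriv α β x * y.eval x := by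
    rw [twistedDeriv]; ring
  simp only [hy', Pi.mul_apply, Pi.add_apply, id_eq, Nat.cast_ofNat, Nat.add_one_sub_one, pow_one]
  linear_combination 2 * weight (α + 1 / 2) (β + 1 / 2) x * twistedDeriv α β y x * hz'_eq

lemma energy_nonneg (hx : x ∈ Ioo (-1) 1) : 0 ≤ energy α β ν y x := by
  have hA := one_sub_sq_pos hx
  exact mul_nonneg (weight_pos hx).le (by positivity)

lemma sq_mul_weight_mul_sq_le_energy (hx : x ∈ Ioo (-1) 1) :
    ν ^ 2 * (weight (α + 1 / 2) (β + 1 / 2) x * y.eval x ^ 2) ≤ energy α β ν y x := by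
  have hA := one_sub_sq_pos hx
  have hW := weight_pos (α := α + 1 / 2) (β := β + 1 / 2) hx
  have hz : 0 ≤ weight (α + 1 / 2) (β + 1 / 2) x * ((1 - x ^ 2) * twistedDeriv α β y x ^ 2) := by
    positivity
  rw [energy]
  linarith

lemma abs_potential_le (α β : ℝ) (hx : x ∈ Ioo (-1) 1) :
    |potential α β x| ≤ (|1 / 4 - α ^ 2| + |1 / 4 - β ^ 2|) / (1 - x ^ 2) := by
  have h₁ : 0 < 1 - x := by linarith [hx.2]
  have h₂ : 0 < 1 + x := by linarith [hx.1]
  have hA := one_sub_sq_pos hx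
  have heq : potential α β x =
      ((1 / 4 - α ^ 2) * ((1 + x) / 2) + (1 / 4 - β ^ 2) * ((1 - x) / 2)) / (1 - x ^ 2) := by
    rw [potential, show 1 - x ^ 2 = (1 - x) * (1 + x) by ring]
    field_simp
  rw [heq, abs_div, abs_of_pos hA]
  gcongr
  refine (abs_add_le _ _).trans ?_
  rw [abs_mul, abs_mul, abs_of_pos (half_pos h₁), abs_of_pos (half_pos h₂)]
  exact add_le_add (mul_le_of_le_one_right (abs_nonneg _) (by linarith))
    (mul_le_of_le_one_right (abs_nonneg _) (by linarith))

lemma abs_deriv_energy_le (hν : 0 < ν) (hx : x ∈ Ioo (-1) 1) :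
    |-(2 * weight (α + 1 / 2) (β + 1 / 2) x * twistedDeriv α β y x * y.eval x *
        potential α β x)| ≤
      (|1 / 4 - α ^ 2| + |1 / 4 - β ^ 2|) / ν * (1 / (√(1 - x ^ 2) * (1 - x ^ 2))) *
        energy α β ν y x := by
  have hA := one_sub_sq_pos hx
  have hW := weight_pos (α := α + 1 / 2) (β := β + 1 / 2) hx
  have hsqrt : 0 < √(1 - x ^ 2) := sqrt_pos.mpr hA
  set z := twistedDeriv α β y x
  set u := y.eval x
  set A := 1 - x ^ 2
  have hamgm : 2 * |z| * |u| ≤ (A * z ^ 2 + ν ^ 2 * u ^ 2) / (ν * √A) := by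
    rw [le_div_iff₀ (by positivity), ← sq_abs z, ← sq_abs u]
    have h := two_mul_le_add_sq (√A * |z|) (ν * |u|)
    rw [mul_pow, sq_sqrt hA.le, mul_pow] at h
    linarith
  rw [abs_neg, abs_mul, abs_mul, abs_mul, abs_mul, abs_two, abs_of_pos hW]
  calc 2 * weight (α + 1 / 2) (β + 1 / 2) x * |z| * |u| * |potential α β x|
      = weight (α + 1 / 2) (β + 1 / 2) x * (2 * |z| * |u| * |potential α β x|) := by ring
    _ ≤ weight (α + 1 / 2) (β + 1 / 2) x * ((A * z ^ 2 + ν ^ 2 * u ^ 2) / (ν * √A) *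
          ((|1 / 4 - α ^ 2| + |1 / 4 - β ^ 2|) / A)) := by
        gcongr
        exact abs_potential_le α β hx
    _ = (|1 / 4 - α ^ 2| + |1 / 4 - β ^ 2|) / ν * (1 / (√A * A)) * energy α β ν y x := by
        rw [show energy α β ν y x =
          weight (α + 1 / 2) (β + 1 / 2) x * (A * z ^ 2 + ν ^ 2 * u ^ 2) from rfl]
        field_simp

lemma hasDerivAt_div_sqrt_one_sub_sq (hx : x ∈ Ioo (-1) 1) :
    HasDerivAt (fun t : ℝ ↦ t / √(1 - t ^ 2)) (1 / (√(1 - x ^ 2) * (1 - x ^ 2))) x := by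
  have hA := one_sub_sq_pos hx
  have hsqrt : 0 < √(1 - x ^ 2) := sqrt_pos.mpr hA
  have hsq : √(1 - x ^ 2) ^ 2 = 1 - x ^ 2 := sq_sqrt hA.le
  refine ((hasDerivAt_id x).div ((((hasDerivAt_id x).fun_pow 2).const_sub 1).sqrt hA.ne')
    hsqrt.ne').congr_deriv ?_
  simp only [id_eq, Nat.cast_ofNat, Nat.add_one_sub_one, pow_one, hsq]
  field_simp
  rw [hsq]
  ring

lemma abs_div_sqrt_one_sub_sq_le {η : ℝ} (hη : 0 < η) (h₁ : η ≤ 1 - x) (h₂ : η ≤ 1 + x) :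
    |x / √(1 - x ^ 2)| ≤ 1 / √η := by
  have hx : |x| ≤ 1 := abs_le.mpr ⟨by linarith, by linarith⟩
  have hA : η ≤ 1 - x ^ 2 := by
    rcases le_total 0 x with _ | _ <;> nlinarith
  rw [abs_div, abs_of_nonneg (sqrt_nonneg _)]
  gcongr

lemma energy_le_mul_exp {η x₀ : ℝ} (hy : jacobiOp α β y = -eigenvalue α β n • y)
    (hν : 0 < n + (α + β + 1) / 2) (hη : 0 < η) (h₁ : η ≤ 1 - x) (h₂ : η ≤ 1 + x)
    (h₁' : η ≤ 1 - x₀) (h₂' : η ≤ 1 + x₀) :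
    energy α β (n + (α + β + 1) / 2) y x ≤ energy α β (n + (α + β + 1) / 2) y x₀ *
      exp ((|1 / 4 - α ^ 2| + |1 / 4 - β ^ 2|) / (n + (α + β + 1) / 2) * (2 / √η)) := by
  have hx : x ∈ Ioo (-1) 1 := ⟨by linarith, by linarith⟩
  have hx₀ : x₀ ∈ Ioo (-1) 1 := ⟨by linarith, by linarith⟩
  refine (le_mul_exp_abs_sub_of_abs_deriv_le (convex_Ioo _ _)
    (fun t ht ↦ hasDerivAt_energy hy ht)
    (fun t ht ↦ (hasDerivAt_div_sqrt_one_sub_sq ht).const_mul _)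
    (fun t ht ↦ abs_deriv_energy_le hν ht) hx₀ hx (energy_nonneg hx₀)).trans ?_
  have hnonneg := energy_nonneg (α := α) (β := β) (ν := n + (α + β + 1) / 2) (y := y) hx₀
  rw [← mul_sub, abs_mul, abs_of_nonneg (by positivity)]
  gcongr
  calc |x / √(1 - x ^ 2) - x₀ / √(1 - x₀ ^ 2)|
      ≤ |x / √(1 - x ^ 2)| + |x₀ / √(1 - x₀ ^ 2)| := abs_sub _ _
    _ ≤ 1 / √η + 1 / √η := add_le_add (abs_div_sqrt_one_sub_sq_le hη h₁ h₂)
        (abs_div_sqrt_one_sub_sq_le hη h₁' h₂')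
    _ = 2 / √η := by ring

lemma abs_halfLogDeriv_le (α β : ℝ) (hx : x ∈ Icc (-(1 / 2)) (1 / 2)) :
    |halfLogDeriv α β x| ≤ |α + 1 / 2| + |β + 1 / 2| := by
  have hbound (a t : ℝ) (ht : 1 / 2 ≤ t) : |a / t| ≤ 2 * |a| := by
    rw [abs_div, abs_of_pos (by linarith : 0 < t), div_le_iff₀ (by linarith)]
    nlinarith [abs_nonneg a]
  rw [halfLogDeriv, abs_div, abs_two, div_le_iff₀ two_pos]
  refine (abs_sub _ _).trans ?_
  linarith [hbound (β + 1 / 2) (1 + x) (by linarith [hx.1]),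
    hbound (α + 1 / 2) (1 - x) (by linarith [hx.2])]

lemma eigenvalue_add_sq (α β n : ℝ) :
    eigenvalue α β n + ((α + β + 1) / 2) ^ 2 = (n + (α + β + 1) / 2) ^ 2 := by
  rw [eigenvalue]; ring

lemma le_eigenvalue (hαβ : -1 < α + β + 1) (hn : 1 ≤ n) : α + β + 2 ≤ eigenvalue α β n := by
  rw [eigenvalue]
  nlinarith

lemma eigenvalue_nonneg (hαβ : -1 < α + β + 1) (hn : 1 ≤ n) : 0 ≤ eigenvalue α β n :=
  (by linarith : 0 ≤ α + β + 2).trans (le_eigenvalue hαβ hn)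

lemma twistedDeriv_sq_le (α β : ℝ) (y : ℝ[X]) (hx : x ∈ Icc (-(1 / 2)) (1 / 2)) :
    twistedDeriv α β y x ^ 2 ≤
      2 * ((derivative y).eval x ^ 2 + (|α + 1 / 2| + |β + 1 / 2|) ^ 2 * y.eval x ^ 2) := by
  have hlog : halfLogDeriv α β x ^ 2 ≤ (|α + 1 / 2| + |β + 1 / 2|) ^ 2 :=
    sq_le_sq.mpr ((abs_halfLogDeriv_le α β hx).trans (le_abs_self _))
  refine add_sq_le.trans ?_
  rw [mul_pow]
  gcongr

lemma exists_forall_add_sq_le_mul_eigenvalue (hαβ : -1 < α + β + 1) {s : ℝ} (hs : 0 ≤ s) :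
    ∃ K, 2 ≤ K ∧ ∀ n, 1 ≤ n → s + (n + (α + β + 1) / 2) ^ 2 ≤ K * eigenvalue α β n := by
  have hpos : 0 < α + β + 2 := by linarith
  set κ := (s + ((α + β + 1) / 2) ^ 2) / (α + β + 2)
  refine ⟨2 + κ, le_add_of_nonneg_right (by positivity), fun n hn ↦ ?_⟩
  have hle := le_eigenvalue hαβ hn
  have hκ : s + ((α + β + 1) / 2) ^ 2 ≤ κ * eigenvalue α β n := by
    rw [div_mul_eq_mul_div, le_div_iff₀ hpos]
    gcongr
  linarith [eigenvalue_add_sq α β n]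

lemma exists_energy_le_mul_dirichlet (hαβ : -1 < α + β + 1) :
    ∃ K, 0 < K ∧ ∀ (n : ℝ) (y : ℝ[X]) (x : ℝ), 1 ≤ n → x ∈ Icc (-(1 / 2)) (1 / 2) →
      energy α β (n + (α + β + 1) / 2) y x ≤
        K * (((1 - x ^ 2) * (derivative y).eval x ^ 2 + eigenvalue α β n * y.eval x ^ 2) *
          weight α β x) := by
  set r := |α + 1 / 2| + |β + 1 / 2|
  obtain ⟨K, hK₂, hK⟩ := exists_forall_add_sq_le_mul_eigenvalue hαβ (s := 2 * r ^ 2) (by positivity)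
  refine ⟨K, by linarith, fun n y x hn hx ↦ ?_⟩
  have hx' : x ∈ Ioo (-1) 1 := ⟨by linarith [hx.1], by linarith [hx.2]⟩
  have hA := one_sub_sq_pos hx'
  have hA₁ : 1 - x ^ 2 ≤ 1 := by linarith [sq_nonneg x]
  have hw := weight_pos (α := α) (β := β) hx'
  have hz := twistedDeriv_sq_le α β y hx
  rw [energy, weight_add _ hx', ← sqrt_eq_rpow]
  set u := y.eval x
  set v := (derivative y).eval x
  calc √(1 - x ^ 2) * weight α β x *
        ((1 - x ^ 2) * twistedDeriv α β y x ^ 2 + (n + (α + β + 1) / 2) ^ 2 * u ^ 2)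
      ≤ 1 * weight α β x * ((1 - x ^ 2) * (2 * (v ^ 2 + r ^ 2 * u ^ 2)) +
          (n + (α + β + 1) / 2) ^ 2 * u ^ 2) := by
        gcongr
        exact sqrt_le_one.mpr hA₁
    _ = weight α β x * (2 * ((1 - x ^ 2) * v ^ 2) +
          ((1 - x ^ 2) * (2 * r ^ 2) + (n + (α + β + 1) / 2) ^ 2) * u ^ 2) := by ring
    _ ≤ weight α β x * (2 * ((1 - x ^ 2) * v ^ 2) +
          (1 * (2 * r ^ 2) + (n + (α + β + 1) / 2) ^ 2) * u ^ 2) := by gcongr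
    _ ≤ weight α β x * (K * ((1 - x ^ 2) * v ^ 2) + K * eigenvalue α β n * u ^ 2) := by
        gcongr
        linarith [hK n hn]
    _ = K * (((1 - x ^ 2) * v ^ 2 + eigenvalue α β n * u ^ 2) * weight α β x) := by ring

end Energy

/-- The paper's regularised weight `w_{α,β}(n; x)`, with the parameter `e` in place of `n⁻²`. -/
noncomputable def regWeight (α β e x : ℝ) : ℝ :=
  (1 - x + e) ^ (α + 1 / 2) * (1 + x + e) ^ (β + 1 / 2)

section RegWeight

variable {α β e δ x κ : ℝ}

lemma rpow_le_rpow_abs_mul_rpow {u v : ℝ} (a : ℝ) (hu : 0 < u) (hv : 0 < v) (huv : u ≤ κ * v)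
    (hvu : v ≤ κ * u) : u ^ a ≤ κ ^ |a| * v ^ a := by
  have hκ : 0 < κ := pos_of_mul_pos_left (hu.trans_le huv) hv.le
  rcases le_total 0 a with ha | ha
  · rw [abs_of_nonneg ha, ← mul_rpow hκ.le hv.le]
    exact rpow_le_rpow hu.le huv ha
  · rw [abs_of_nonpos ha, rpow_neg hκ.le, ← inv_rpow hκ.le, ← mul_rpow (inv_pos.mpr hκ).le hv.le]
    refine rpow_le_rpow_of_nonpos (by positivity) ?_ ha
    rwa [inv_mul_le_iff₀ hκ]

lemma regWeight_neg (α β e x : ℝ) : regWeight α β e (-x) = regWeight β α e x := by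
  simp only [regWeight, sub_neg_eq_add, ← sub_eq_add_neg, mul_comm]

lemma regWeight_le_mul_weight (hδ : 0 < δ) (he : 0 < e) (h₁ : δ * e ≤ 1 - x)
    (h₂ : δ * e ≤ 1 + x) :
    regWeight α β e x ≤ (1 + 1 / δ) ^ |α + 1 / 2| * (1 + 1 / δ) ^ |β + 1 / 2| *
      weight (α + 1 / 2) (β + 1 / 2) x := by
  have hshift (a t : ℝ) (ht : δ * e ≤ t) : (t + e) ^ a ≤ (1 + 1 / δ) ^ |a| * t ^ a := by
    have ht₀ : 0 < t := (mul_pos hδ he).trans_le ht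
    refine rpow_le_rpow_abs_mul_rpow a (by positivity) ht₀ ?_ ?_
    · have : e ≤ t / δ := (le_div_iff₀' hδ).mpr ht
      linear_combination this
    · calc t ≤ t + e := by linarith
        _ ≤ (1 + 1 / δ) * (t + e) := le_mul_of_one_le_left (by positivity)
          (le_add_of_nonneg_right (by positivity))
  have hx₁ : 0 < 1 - x := (mul_pos hδ he).trans_le h₁
  have hx₂ : 0 < 1 + x := (mul_pos hδ he).trans_le h₂
  calc regWeight α β e x ≤ ((1 + 1 / δ) ^ |α + 1 / 2| * (1 - x) ^ (α + 1 / 2)) *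
        ((1 + 1 / δ) ^ |β + 1 / 2| * (1 + x) ^ (β + 1 / 2)) :=
        mul_le_mul (hshift _ _ h₁) (hshift _ _ h₂) (by positivity) (by positivity)
    _ = _ := by rw [weight]; ring

lemma regWeight_le_mul_regWeight_of_mem_edge (hδ : 0 < δ) (hδ' : δ ≤ 1) (he : 0 < e)
    (he' : e ≤ 1) (hx : x ∈ Icc (1 - δ * e) 1) :
    regWeight α β e x ≤
      2 ^ |α + 1 / 2| * 2 ^ |β + 1 / 2| * regWeight α β e (1 - δ * e) := by
  obtain ⟨hx, hx'⟩ := hx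
  have hδe : 0 < δ * e := mul_pos hδ he
  have hδe' : δ * e ≤ e := mul_le_of_le_one_left he.le hδ'
  have h₁ : (1 - x + e) ^ (α + 1 / 2) ≤
      2 ^ |α + 1 / 2| * (1 - (1 - δ * e) + e) ^ (α + 1 / 2) := by
    apply rpow_le_rpow_abs_mul_rpow <;> linarith
  have h₂ : (1 + x + e) ^ (β + 1 / 2) ≤
      2 ^ |β + 1 / 2| * (1 + (1 - δ * e) + e) ^ (β + 1 / 2) := by
    apply rpow_le_rpow_abs_mul_rpow <;> linarith
  have hp : 0 ≤ 1 - (1 - δ * e) + e := by linarith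
  refine (mul_le_mul h₁ h₂ (rpow_nonneg (by linarith) _) (by positivity)).trans_eq ?_
  rw [regWeight]
  ring

lemma abs_le_sqrt_mul_of_rpow_mul_sq_le {p q a b t C : ℝ} (hp : 0 < p) (hq : 0 < q)
    (h : p ^ a * q ^ b * t ^ 2 ≤ C) : |t| ≤ √C * p ^ (-(a / 2)) * q ^ (-(b / 2)) := by
  have hC : 0 ≤ C := le_trans (by positivity) h
  refine abs_le_of_sq_le_sq ?_ (by positivity)
  have hsq {r : ℝ} (s : ℝ) (hr : 0 < r) : (r ^ (-(s / 2))) ^ 2 = (r ^ s)⁻¹ := by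
    rw [← rpow_natCast, ← rpow_mul hr.le, ← rpow_neg hr.le]
    norm_num
  rw [mul_pow, mul_pow, sq_sqrt hC, hsq a hp, hsq b hq]
  have hpa : 0 < p ^ a := by positivity
  have hqb : 0 < q ^ b := by positivity
  rw [← div_eq_mul_inv, ← div_eq_mul_inv, div_div, le_div_iff₀ (mul_pos hpa hqb)]
  linarith

end RegWeight

section Bound

variable {α β δ n x : ℝ} {y : ℝ[X]}

lemma eigenvalue_comm (α β n : ℝ) : eigenvalue α β n = eigenvalue β α n := by
  rw [eigenvalue, eigenvalue, add_right_comm n α β]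

lemma eigenvalue_mul_inv_sq_le (α β : ℝ) (hn : 1 ≤ n) :
    eigenvalue α β n * n⁻¹ ^ 2 ≤ 1 + |α + β + 1| := by
  rw [inv_pow, ← div_eq_mul_inv, div_le_iff₀ (by positivity), eigenvalue]
  have hle : n * (α + β + 1) ≤ n ^ 2 * |α + β + 1| :=
    calc n * (α + β + 1) ≤ n * |α + β + 1| := by gcongr; exact le_abs_self _
      _ ≤ n ^ 2 * |α + β + 1| := by gcongr; exact le_self_pow₀ hn two_ne_zero
  linarith

lemma div_mul_two_div_sqrt_le {A ν : ℝ} (hA : 0 ≤ A) (hδ : 0 < δ) (hn : 0 < n)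
    (hν : n / 2 ≤ ν) : A / ν * (2 / √(δ * n⁻¹ ^ 2)) ≤ 4 * A / √δ := by
  calc A / ν * (2 / √(δ * n⁻¹ ^ 2)) ≤ A / (n / 2) * (2 / √(δ * n⁻¹ ^ 2)) := by gcongr
    _ = 4 * A / √δ := by
      rw [sqrt_mul hδ.le, sqrt_sq (by positivity)]
      field_simp
      norm_num

lemma exists_weight_mul_sq_le (hα : -1 < α) (hβ : -1 < β) (hδ : 0 < δ) (hδ' : δ ≤ 1 / 2) :
    ∃ C, 0 < C ∧ ∀ (n : ℝ) (y : ℝ[X]) (x : ℝ), 1 ≤ n →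
      jacobiOp α β y = -eigenvalue α β n • y → weightedIntegral hα hβ (y * y) = 1 →
      δ * n⁻¹ ^ 2 ≤ 1 - x → δ * n⁻¹ ^ 2 ≤ 1 + x →
      weight (α + 1 / 2) (β + 1 / 2) x * y.eval x ^ 2 ≤ C := by
  obtain ⟨K, hK, hdirichlet⟩ := exists_energy_le_mul_dirichlet (show -1 < α + β + 1 by linarith)
  set A := |1 / 4 - α ^ 2| + |1 / 4 - β ^ 2|
  refine ⟨2 * K * exp (4 * A / √δ), by positivity, fun n y x hn hy hnorm h₁ h₂ ↦ ?_⟩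
  have hn₀ : 0 < n := by linarith
  have hn₁ : n⁻¹ ^ 2 ≤ 1 := pow_le_one₀ (by positivity) (inv_le_one_of_one_le₀ hn)
  have hη : 0 < δ * n⁻¹ ^ 2 := by positivity
  have hη' : δ * n⁻¹ ^ 2 ≤ 1 / 2 := (mul_le_of_le_one_right hδ.le hn₁).trans hδ'
  obtain ⟨x₀, hx₀, hle⟩ := exists_mem_middle_dirichlet_le hα hβ
    (eigenvalue_nonneg (by linarith) hn) hy
  rw [hnorm, mul_one] at hle
  have hν : n / 2 ≤ n + (α + β + 1) / 2 := by linarith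
  have hgrowth := energy_le_mul_exp hy (by linarith) hη h₁ h₂
    (show δ * n⁻¹ ^ 2 ≤ 1 - x₀ by linarith [hx₀.2]) (by linarith [hx₀.1])
  have hstart := hdirichlet n y x₀ hn hx₀
  have hsq := eigenvalue_add_sq α β n
  set ν := n + (α + β + 1) / 2
  have hν₀ : 0 < ν := by linarith
  refine le_of_mul_le_mul_left ?_ (pow_pos hν₀ 2)
  calc ν ^ 2 * (weight (α + 1 / 2) (β + 1 / 2) x * y.eval x ^ 2) ≤ energy α β ν y x :=
        sq_mul_weight_mul_sq_le_energy ⟨by linarith, by linarith⟩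
    _ ≤ energy α β ν y x₀ * exp (A / ν * (2 / √(δ * n⁻¹ ^ 2))) := hgrowth
    _ ≤ (K * (2 * ν ^ 2)) * exp (4 * A / √δ) := by
        refine mul_le_mul (hstart.trans (mul_le_mul_of_nonneg_left (hle.trans ?_) hK.le))
          (exp_le_exp.mpr (div_mul_two_div_sqrt_le (by positivity) hδ hn₀ hν))
          (exp_pos _).le (by positivity)
        linarith [sq_nonneg ((α + β + 1) / 2)]
    _ = ν ^ 2 * (2 * K * exp (4 * A / √δ)) := by ring

lemma regWeight_mul_sq_le_of_mem_right_edge (hα : -1 < α) (hβ : -1 < β) (hδ : 0 < δ)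
    (hδ₁ : δ ≤ 1) (hδα : (1 + |α + β + 1|) * δ ≤ (α + 1) / 2) (hn : 1 ≤ n)
    (hy : jacobiOp α β y = -eigenvalue α β n • y) (hx : x ∈ Icc (1 - δ * n⁻¹ ^ 2) 1) :
    regWeight α β (n⁻¹ ^ 2) x * y.eval x ^ 2 ≤ 4 * 2 ^ |α + 1 / 2| * 2 ^ |β + 1 / 2| *
      (regWeight α β (n⁻¹ ^ 2) (1 - δ * n⁻¹ ^ 2) * y.eval (1 - δ * n⁻¹ ^ 2) ^ 2) := by
  have hscale := eigenvalue_mul_inv_sq_le α β hn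
  have he₀ : 0 < n⁻¹ ^ 2 := by positivity
  have he₁ : n⁻¹ ^ 2 ≤ 1 := pow_le_one₀ (by positivity) (inv_le_one_of_one_le₀ hn)
  have hweight := regWeight_le_mul_regWeight_of_mem_edge (α := α) (β := β) hδ hδ₁ he₀ he₁ hx
  set e := n⁻¹ ^ 2
  have hδe : δ * e ≤ δ := mul_le_of_le_one_right hδ.le he₁
  have hdouble : |y.eval x| ≤ 2 * |y.eval (1 - δ * e)| := by
    refine abs_eval_le_two_mul_abs_eval hα hβ (eigenvalue_nonneg (by linarith) hn) hy
      (by linarith) ?_ ?_ hx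
    · nlinarith [le_abs_self (α + β + 1)]
    · nlinarith
  have hsq : y.eval x ^ 2 ≤ 4 * y.eval (1 - δ * e) ^ 2 := by
    rw [← sq_abs, ← sq_abs (y.eval (1 - δ * e))]
    nlinarith [abs_nonneg (y.eval x)]
  refine (mul_le_mul hweight hsq (sq_nonneg _) ?_).trans_eq (by ring)
  have h₁ : 0 ≤ 1 - (1 - δ * e) + e := by nlinarith
  have h₂ : 0 ≤ 1 + (1 - δ * e) + e := by linarith
  rw [regWeight]
  positivity

lemma regWeight_mul_sq_le_of_mem_left_edge (hα : -1 < α) (hβ : -1 < β) (hδ : 0 < δ)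
    (hδ₁ : δ ≤ 1) (hδβ : (1 + |α + β + 1|) * δ ≤ (β + 1) / 2) (hn : 1 ≤ n)
    (hy : jacobiOp α β y = -eigenvalue α β n • y) (hx : x ∈ Icc (-1) (δ * n⁻¹ ^ 2 - 1)) :
    regWeight α β (n⁻¹ ^ 2) x * y.eval x ^ 2 ≤ 4 * 2 ^ |α + 1 / 2| * 2 ^ |β + 1 / 2| *
      (regWeight α β (n⁻¹ ^ 2) (δ * n⁻¹ ^ 2 - 1) * y.eval (δ * n⁻¹ ^ 2 - 1) ^ 2) := by
  have hreflect : jacobiOp β α (y.comp (-X)) = -eigenvalue β α n • y.comp (-X) := by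
    rw [eigenvalue_comm]
    exact jacobiOp_comp_neg_X hy
  have h := regWeight_mul_sq_le_of_mem_right_edge (x := -x) hβ hα hδ hδ₁ (by rwa [add_comm β])
    hn hreflect ⟨by linarith [hx.2], by linarith [hx.1]⟩
  simpa only [eval_comp, eval_neg, eval_X, neg_neg, regWeight_neg, ← neg_sub (δ * n⁻¹ ^ 2) 1,
    mul_right_comm (4 : ℝ) (2 ^ |β + 1 / 2|)] using h

lemma exists_edge_width (hα : -1 < α) (hβ : -1 < β) :
    ∃ δ : ℝ, 0 < δ ∧ δ ≤ 1 / 2 ∧ (1 + |α + β + 1|) * δ ≤ (α + 1) / 2 ∧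
      (1 + |α + β + 1|) * δ ≤ (β + 1) / 2 := by
  have hs : 0 < 1 + |α + β + 1| := by positivity
  have hmin : 0 < min (α + 1) (β + 1) := lt_min (by linarith) (by linarith)
  have heq : (1 + |α + β + 1|) * (min (α + 1) (β + 1) / 2 / (1 + |α + β + 1|)) =
      min (α + 1) (β + 1) / 2 := mul_div_cancel₀ _ hs.ne'
  refine ⟨min (α + 1) (β + 1) / 2 / (1 + |α + β + 1|), by positivity, ?_, ?_, ?_⟩
  · rw [div_le_iff₀ hs]
    linarith [min_le_left (α + 1) (β + 1), min_le_right (α + 1) (β + 1),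
      le_abs_self (α + β + 1), abs_nonneg (α + β + 1)]
  · rw [heq]
    gcongr
    exact min_le_left _ _
  · rw [heq]
    gcongr
    exact min_le_right _ _

lemma exists_regWeight_mul_sq_le (hα : -1 < α) (hβ : -1 < β) :
    ∃ C, 0 < C ∧ ∀ (n : ℝ) (y : ℝ[X]), 1 ≤ n → jacobiOp α β y = -eigenvalue α β n • y →
      weightedIntegral hα hβ (y * y) = 1 →
      ∀ x ∈ Icc (-1) 1, regWeight α β (n⁻¹ ^ 2) x * y.eval x ^ 2 ≤ C := by
  obtain ⟨δ, hδ, hδ', hδα, hδβ⟩ := exists_edge_width hα hβ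
  obtain ⟨C, hC, hinterior⟩ := exists_weight_mul_sq_le hα hβ hδ hδ'
  set κ := (1 + 1 / δ) ^ |α + 1 / 2| * (1 + 1 / δ) ^ |β + 1 / 2|
  set T : ℝ := 4 * 2 ^ |α + 1 / 2| * 2 ^ |β + 1 / 2|
  have hT : 1 ≤ T := by
    have h₁ := one_le_rpow one_le_two (abs_nonneg (α + 1 / 2))
    have h₂ := one_le_rpow one_le_two (abs_nonneg (β + 1 / 2))
    nlinarith
  have hκ : 0 < κ := by positivity
  refine ⟨T * (κ * C), by positivity, fun n y hn hy hnorm x hx ↦ ?_⟩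
  have he : 0 < n⁻¹ ^ 2 := by positivity
  have he₁ : n⁻¹ ^ 2 ≤ 1 := pow_le_one₀ (by positivity) (inv_le_one_of_one_le₀ hn)
  have hδe : δ * n⁻¹ ^ 2 ≤ 1 / 2 := by nlinarith
  have hmiddle (t : ℝ) (h₁ : δ * n⁻¹ ^ 2 ≤ 1 - t) (h₂ : δ * n⁻¹ ^ 2 ≤ 1 + t) :
      regWeight α β (n⁻¹ ^ 2) t * y.eval t ^ 2 ≤ κ * C := by
    calc regWeight α β (n⁻¹ ^ 2) t * y.eval t ^ 2
        ≤ κ * weight (α + 1 / 2) (β + 1 / 2) t * y.eval t ^ 2 := by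
          gcongr
          exact regWeight_le_mul_weight hδ he h₁ h₂
      _ = κ * (weight (α + 1 / 2) (β + 1 / 2) t * y.eval t ^ 2) := mul_assoc _ _ _
      _ ≤ κ * C := mul_le_mul_of_nonneg_left (hinterior n y t hn hy hnorm h₁ h₂) hκ.le
  rcases le_total (1 - x) (δ * n⁻¹ ^ 2) with hright | hright
  · refine (regWeight_mul_sq_le_of_mem_right_edge hα hβ hδ (by linarith) hδα hn hy
      ⟨by linarith, hx.2⟩).trans ?_
    exact mul_le_mul_of_nonneg_left (hmiddle _ (by linarith) (by linarith)) (by positivity)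
  rcases le_total (1 + x) (δ * n⁻¹ ^ 2) with hleft | hleft
  · refine (regWeight_mul_sq_le_of_mem_left_edge hα hβ hδ (by linarith) hδβ hn hy
      ⟨hx.1, by linarith⟩).trans ?_
    exact mul_le_mul_of_nonneg_left (hmiddle _ (by linarith) (by linarith)) (by positivity)
  · exact (hmiddle x hright hleft).trans (le_mul_of_one_le_left (by positivity) hT)

end Bound

end JacobiPolynomial

open JacobiPolynomial in
theorem stmt13_general (α β : ℝ) (hα : -1 < α) (hβ : -1 < β) :
    ∃ c : ℝ, 0 < c ∧ ∀ P : ℕ → Polynomial ℝ,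
      (∀ n : ℕ, (P n).natDegree = n) →
      (∀ n m : ℕ,
        (∫ t in Icc (-1 : ℝ) 1,
          (P n).eval t * (P m).eval t * (1 - t) ^ α * (1 + t) ^ β) =
          if n = m then 1 else 0) →
      ∀ n : ℕ, 1 ≤ n → ∀ x ∈ Icc (-1 : ℝ) 1,
        |(P n).eval x| ≤
          c * (1 - x + ((n : ℝ))⁻¹ ^ 2) ^ (-((α + 1/2) / 2)) *
              (1 + x + ((n : ℝ))⁻¹ ^ 2) ^ (-((β + 1/2) / 2)) := by
  obtain ⟨C, hC, hbound⟩ := exists_regWeight_mul_sq_le hα hβ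
  refine ⟨√C, sqrt_pos.mpr hC, fun P hdeg hP n hn x hx ↦ ?_⟩
  have horth (i j : ℕ) : weightedIntegral hα hβ (P i * P j) = if i = j then 1 else 0 := by
    rw [← hP, weightedIntegral_apply, intervalIntegral.integral_of_le (by norm_num),
      integral_Icc_eq_integral_Ioc]
    simp only [Polynomial.eval_mul, weight, mul_assoc]
  have hne (i : ℕ) : P i ≠ 0 := fun h ↦ by simpa [h] using horth i i
  let S : Polynomial.Sequence ℝ :=
    ⟨P, fun i ↦ by rw [Polynomial.degree_eq_natDegree (hne i), hdeg]⟩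
  have hjacobi : jacobiOp α β (P n) = -eigenvalue α β n • P n :=
    jacobiOp_eq_neg_eigenvalue_smul hα hβ S (fun i j hij ↦ (horth i j).trans (if_neg hij))
      (fun k ↦ (horth k k).trans_ne (by simp)) n
  have he : (0 : ℝ) < (n : ℝ)⁻¹ ^ 2 := by positivity
  exact abs_le_sqrt_mul_of_rpow_mul_sq_le (by linarith [hx.2]) (by linarith [hx.1])
    (hbound n (P n) (by exact_mod_cast hn) hjacobi ((horth n n).trans (if_pos rfl)) x hx)

/-- Bound for the `L²`-normalized Jacobi polynomials: for `α, β ≥ -1/2` there is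
`c = c(α,β)` such that `|P̃_n^{(α,β)}(x)| ≤ c · w_{α,β}(n;x)^{-1/2}` where
`w_{α,β}(n;x) = (1-x+n^{-2})^{α+1/2}(1+x+n^{-2})^{β+1/2}`. -/
theorem stmt13 (α β : ℝ) (hα : -(1/2 : ℝ) ≤ α) (hβ : -(1/2 : ℝ) ≤ β) :
    ∃ c : ℝ, 0 < c ∧ ∀ P : ℕ → Polynomial ℝ,
      (∀ n : ℕ, (P n).natDegree = n) →
      (∀ n m : ℕ,
        (∫ t in Icc (-1 : ℝ) 1,
          (P n).eval t * (P m).eval t * (1 - t) ^ α * (1 + t) ^ β) =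
          if n = m then 1 else 0) →
      ∀ n : ℕ, 1 ≤ n → ∀ x ∈ Icc (-1 : ℝ) 1,
        |(P n).eval x| ≤
          c * (1 - x + ((n : ℝ))⁻¹ ^ 2) ^ (-((α + 1/2) / 2)) *
              (1 + x + ((n : ℝ))⁻¹ ^ 2) ^ (-((β + 1/2) / 2)) :=
  stmt13_general α β (by linarith) (by linarith)
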